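/- arXiv:2404.15453 — 3 statements merged into one kernel-verified Lean document; each statement's English description precedes it below -/
import Mathlib

section
/- For all constants c₁, c₂, c₃ > 0 and every integer vector \underline{i} = (i₁, …, i_m) with m ≥ 2 and all entries ≥ 1, there exists C > 0 (depending only on c₁, c₂, c₃ and \underline{i}) with the following property. Let V be a real inner product space, L : V → V a semi-negative linear map with adjoint L*, P : V → V an orthogonal projection, and h > 0, such that for all w, v ∈ V: ‖P L w‖ ≤ c₁ h^{−1/2} |w|_Γ, ‖P L* w‖ ≤ c₁ h^{−1/2} |w|_Γ, |v|_Γ ≤ c₂ h^{−1/2} ‖v‖, and ‖L v‖ ≤ c₃ h^{−1} ‖v‖. Writing |\underline{i}| = i₁ + ⋯ + i_m and L^{\underline{i}} = L^{i₁} P L^{i₂} P ⋯ P L^{i_m}, one has for all w ∈ V: ‖L^{\underline{i}} w‖ ≤ C h^{−|\underline{i}| + i_m − 1/2} |L^{i_m − 1} w|_Γ. -/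
open RealInnerProductSpace

/-- The jump seminorm `|v|_Γ = (-⟪(L + L*)v, v⟫)^{1/2}` associated with a
semi-negative operator `L` with adjoint `L*`. -/
noncomputable def jumpSN {V : Type*} [NormedAddCommGroup V] [InnerProductSpace ℝ V]
    (L Lstar : V →ₗ[ℝ] V) (v : V) : ℝ :=
  Real.sqrt (-⟪(L + Lstar) v, v⟫)

/-- Alternating composition `L^{i₁} P L^{i₂} P ⋯ P L^{i_m}` associated with an
integer vector `(i₁, …, i_m)`. -/
def altComp {V : Type*} [AddCommGroup V] [Module ℝ V]
    (L P : V →ₗ[ℝ] V) : List ℕ → (V →ₗ[ℝ] V)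
  | [] => 1
  | [i] => L ^ i
  | i :: rest => L ^ i * P * altComp L P rest

theorem aux_pow {V : Type*} [NormedAddCommGroup V] [InnerProductSpace ℝ V]
    (L : V →ₗ[ℝ] V) (a : ℝ) (ha : 0 ≤ a) (hL : ∀ v : V, ‖L v‖ ≤ a * ‖v‖) (i : ℕ) (v : V) :
    ‖(L ^ i) v‖ ≤ a ^ i * ‖v‖ := by
  induction i with
  | zero => simp
  | succ n ih =>
    rw [pow_succ', Module.End.mul_apply, pow_succ', mul_assoc]
    exact (hL _).trans (mul_le_mul_of_nonneg_left ih ha)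

theorem aux_proj {V : Type*} [NormedAddCommGroup V] [InnerProductSpace ℝ V]
    (P : V →ₗ[ℝ] V) (h1 : ∀ w v : V, ⟪P w, v⟫ = ⟪w, P v⟫) (h2 : ∀ v : V, P (P v) = P v)
    (v : V) : ‖P v‖ ≤ ‖v‖ := by
  have h3 : ‖P v‖ * ‖P v‖ ≤ ‖v‖ * ‖P v‖ := by
    rw [← real_inner_self_eq_norm_mul_norm, h1, h2]
    exact real_inner_le_norm _ _
  rcases (norm_nonneg (P v)).eq_or_lt with h | h
  · rw [← h]; exact norm_nonneg _
  · exact le_of_mul_le_mul_right h3 h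

theorem aux_main {V : Type*} [NormedAddCommGroup V] [InnerProductSpace ℝ V]
    (L P : V →ₗ[ℝ] V) (a : ℝ) (ha : 0 ≤ a) (hL : ∀ v : V, ‖L v‖ ≤ a * ‖v‖)
    (hP : ∀ v : V, ‖P v‖ ≤ ‖v‖) (J : V → ℝ) (hJ : ∀ w, ‖P (L w)‖ ≤ J w) (w : V) :
    ∀ (r : List ℕ) (i : ℕ), (∀ x ∈ i :: r, 1 ≤ x) →
      ‖P (altComp L P (i :: r) w)‖ ≤
        a ^ (i :: r).dropLast.sum * J ((L ^ ((i :: r).getLastD 0 - 1)) w) := by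
  intro r
  induction r with
  | nil =>
    intro i hi
    obtain ⟨n, rfl⟩ : ∃ n, i = n + 1 := ⟨i - 1, by have := hi i (by simp); omega⟩
    simpa [altComp, pow_succ'] using hJ ((L ^ n) w)
  | cons j r ih =>
    intro i hi
    have h1 := ih j (fun x hx => hi x (List.mem_cons_of_mem _ hx))
    have h2 : altComp L P (i :: j :: r) w = (L ^ i) (P (altComp L P (j :: r) w)) := rfl
    rw [h2]
    refine (hP _).trans ((aux_pow L a ha hL i _).trans ?_)
    rw [List.dropLast_cons₂, List.sum_cons, pow_add, mul_assoc]
    exact mul_le_mul_of_nonneg_left h1 (pow_nonneg ha _)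

theorem aux_sum : ∀ (r : List ℕ) (i : ℕ),
    (i :: r).sum = (i :: r).dropLast.sum + (i :: r).getLastD 0 := by
  intro r
  induction r with
  | nil => intro i; simp
  | cons j r ih =>
    intro i
    rw [List.dropLast_cons₂, List.sum_cons, ih j, List.sum_cons, add_assoc]
    rfl

/-- Lemma 3.12: for an integer vector `iv = (i₁,…,i_m)` with `m ≥ 2` and positive
entries, `‖L^{iv} w‖ ≤ C h^{-|iv|+i_m-1/2} |L^{i_m-1} w|_Γ`. -/
theorem norm_altComp_bound :
    ∀ c₁ c₂ c₃ : ℝ, 0 < c₁ → 0 < c₂ → 0 < c₃ →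
    ∀ iv : List ℕ, 2 ≤ iv.length → (∀ x ∈ iv, 1 ≤ x) →
    ∃ C > (0 : ℝ),
      ∀ (V : Type) [NormedAddCommGroup V] [InnerProductSpace ℝ V],
      ∀ L Lstar P : V →ₗ[ℝ] V,
        (∀ w v : V, ⟪L w, v⟫ = ⟪w, Lstar v⟫) →
        (∀ v : V, ⟪(L + Lstar) v, v⟫ ≤ 0) →
        (∀ w v : V, ⟪P w, v⟫ = ⟪w, P v⟫) →
        (∀ v : V, P (P v) = P v) →
        ∀ h : ℝ, 0 < h →
        (∀ w : V, ‖P (L w)‖ ≤ c₁ * h ^ (-(1 / 2) : ℝ) * jumpSN L Lstar w) →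
        (∀ w : V, ‖P (Lstar w)‖ ≤ c₁ * h ^ (-(1 / 2) : ℝ) * jumpSN L Lstar w) →
        (∀ v : V, jumpSN L Lstar v ≤ c₂ * h ^ (-(1 / 2) : ℝ) * ‖v‖) →
        (∀ v : V, ‖L v‖ ≤ c₃ * h⁻¹ * ‖v‖) →
        ∀ w : V,
          ‖altComp L P iv w‖
            ≤ C * h ^ (-(iv.sum : ℝ) + (iv.getLastD 0 : ℝ) - 1 / 2)
                * jumpSN L Lstar ((L ^ (iv.getLastD 0 - 1)) w) := by
  intro c₁ c₂ c₃ hc₁ hc₂ hc₃ iv hlen hpos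
  refine ⟨c₁ * c₃ ^ iv.dropLast.sum, by positivity, ?_⟩
  intro V _ _ L Lstar P hadj hneg hP1 hP2 h hh hPL hPLs htr hL w
  match iv, hlen, hpos with
  | i :: j :: r, _, hpos =>
    have ha : 0 ≤ c₃ * h⁻¹ := by positivity
    have hm := aux_main L P (c₃ * h⁻¹) ha hL (aux_proj P hP1 hP2) _ hPL w r j
      (fun x hx => hpos x (List.mem_cons_of_mem _ hx))
    have h2 : altComp L P (i :: j :: r) w = (L ^ i) (P (altComp L P (j :: r) w)) := rfl
    have h3 : (i :: j :: r).getLastD 0 = (j :: r).getLastD 0 := rfl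
    have hs := aux_sum (j :: r) i
    have he : (-((i :: j :: r).sum : ℝ) + ((i :: j :: r).getLastD 0 : ℝ) - 1 / 2)
        = -((i :: j :: r).dropLast.sum : ℝ) + (-(1 / 2) : ℝ) := by
      rw [hs]; push_cast; ring
    rw [he, Real.rpow_add hh, Real.rpow_neg hh.le, Real.rpow_natCast, h2, h3]
    refine (aux_pow L _ ha hL i _).trans
      ((mul_le_mul_of_nonneg_left hm (pow_nonneg ha _)).trans (le_of_eq ?_))
    rw [List.dropLast_cons₂, List.sum_cons, ← mul_assoc, ← pow_add, mul_pow, inv_pow]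
    ring
end

section
/- For all constants c₁, c₂, c₃, M > 0 and every integer s ≥ 1, there exists C > 0 (depending only on c₁, c₂, c₃, M, s) with the following property. Let V be a real inner product space, L : V → V a semi-negative linear map with adjoint L*, P : V → V an orthogonal projection, h > 0, τ > 0 with λ = τ/h ≤ 1, such that for all w, v ∈ V: ‖P L w‖ ≤ c₁ h^{−1/2} |w|_Γ, ‖P L* w‖ ≤ c₁ h^{−1/2} |w|_Γ, |v|_Γ ≤ c₂ h^{−1/2} ‖v‖, and ‖L v‖ ≤ c₃ h^{−1} ‖v‖. Let α₀, …, α_s be reals with |α_i| ≤ M, and let μ_{\underline{i}} be reals with |μ_{\underline{i}}| ≤ M, indexed by the (finitely many) integer vectors \underline{i} = (i₁,…,i_m) with m ≥ 2, all entries ≥ 1, and |\underline{i}| ≤ s. Set R = Σ_{i=0}^s α_i (τL)^i and R̃ = R + Σ_{\underline{i}} μ_{\underline{i}} τ^{|\underline{i}|} L^{\underline{i}}. Then for all w ∈ V, ‖R̃ w‖² ≤ ‖R w‖² + C λ Σ_{i=0}^{2s−2} τ^{2i+1} |L^i w|_Γ². -/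
open RealInnerProductSpace

section Helpers
variable {V : Type*} [NormedAddCommGroup V] [InnerProductSpace ℝ V]

theorem aux_cs (L Lstar : V →ₗ[ℝ] V)
    (hadj : ∀ w v : V, ⟪L w, v⟫ = ⟪w, Lstar v⟫)
    (hneg : ∀ v : V, ⟪(L + Lstar) v, v⟫ ≤ 0) (v u : V) :
    |⟪(L + Lstar) v, u⟫| ≤ jumpSN L Lstar v * jumpSN L Lstar u := by
  have hsymm : ⟪(L + Lstar) u, v⟫ = ⟪(L + Lstar) v, u⟫ := by
    have h1 := hadj u v
    have h2 := hadj v u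
    have h3 := real_inner_comm u (Lstar v)
    have h4 := real_inner_comm v (Lstar u)
    simp only [LinearMap.add_apply, inner_add_left]
    linarith
  have key := discrim_le_zero (a := -⟪(L + Lstar) v, v⟫) (b := -(2 * ⟪(L + Lstar) v, u⟫))
    (c := -⟪(L + Lstar) u, u⟫) (by
      intro x
      have h := hneg (x • v + u)
      rw [map_add, map_smul, inner_add_left, inner_add_right, inner_add_right,
        real_inner_smul_left, real_inner_smul_left, real_inner_smul_right,
        real_inner_smul_right, hsymm] at h
      nlinarith [h])
  unfold discrim at key
  unfold jumpSN
  rw [← Real.sqrt_mul (by linarith [hneg v])]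
  apply Real.abs_le_sqrt
  nlinarith [key]

theorem aux_P_norm (P : V →ₗ[ℝ] V) (hP : ∀ w v : V, ⟪P w, v⟫ = ⟪w, P v⟫)
    (hPP : ∀ v : V, P (P v) = P v) (v : V) : ‖P v‖ ≤ ‖v‖ := by
  have h : ‖P v‖ * ‖P v‖ ≤ ‖v‖ * ‖P v‖ := by
    rw [← real_inner_self_eq_norm_mul_norm, hP, hPP]
    exact real_inner_le_norm _ _
  rcases (norm_nonneg (P v)).eq_or_lt with h0 | h0
  · rw [← h0]; exact norm_nonneg _
  · exact le_of_mul_le_mul_right h h0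

theorem aux_pow_norm (T : V →ₗ[ℝ] V) (c : ℝ) (hc : 1 ≤ c) (hT : ∀ v, ‖T v‖ ≤ c * ‖v‖)
    (i : ℕ) (v : V) : ‖(T ^ i) v‖ ≤ c ^ i * ‖v‖ := by
  induction i with
  | zero => simp
  | succ n ih =>
    rw [pow_succ', Module.End.mul_apply, pow_succ', mul_assoc]
    exact (hT _).trans (by gcongr)

theorem aux_P_alt (T P : V →ₗ[ℝ] V) (c A : ℝ) (hc : 1 ≤ c) (hA : 0 ≤ A)
    (hT : ∀ v, ‖T v‖ ≤ c * ‖v‖) (hPn : ∀ v, ‖P v‖ ≤ ‖v‖) (w : V) (n : ℕ)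
    (hw : ∀ i, i < n → ‖P (T ((T ^ i) w))‖ ≤ c * A) :
    ∀ l : List ℕ, l ≠ [] → (∀ x ∈ l, 1 ≤ x) → l.sum ≤ n →
      ‖P (altComp T P l w)‖ ≤ c ^ l.sum * A
  | [], h, _, _ => absurd rfl h
  | [i], _, h1, hs => by
    have hi : 1 ≤ i := h1 i (by simp)
    obtain ⟨k, rfl⟩ : ∃ k, i = k + 1 := ⟨i - 1, by omega⟩
    simp only [List.sum_cons, List.sum_nil, add_zero] at hs ⊢
    simp only [altComp]
    rw [pow_succ' T, Module.End.mul_apply]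
    refine (hw k (by omega)).trans ?_
    gcongr
    exact le_self_pow₀ hc (by omega)
  | i :: j :: rest, _, h1, hs => by
    have ih := aux_P_alt T P c A hc hA hT hPn w n hw (j :: rest) (by simp)
      (fun x hx => h1 x (List.mem_cons_of_mem _ hx)) (by
        rw [List.sum_cons] at hs; omega)
    have e : altComp T P (i :: j :: rest) w = (T ^ i) (P (altComp T P (j :: rest) w)) := rfl
    rw [e, List.sum_cons, pow_add, mul_assoc]
    refine (hPn _).trans ((aux_pow_norm T c hc hT i _).trans ?_)
    gcongr

theorem aux_cross (T T' P : V →ₗ[ℝ] V) (c A : ℝ) (hc : 1 ≤ c) (hA : 0 ≤ A)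
    (hadj : ∀ w v : V, ⟪T w, v⟫ = ⟪w, T' v⟫)
    (hP : ∀ w v : V, ⟪P w, v⟫ = ⟪w, P v⟫)
    (hT : ∀ v, ‖T v‖ ≤ c * ‖v‖) (w : V) (n : ℕ)
    (hw : ∀ i, i < n → ‖P (T ((T ^ i) w))‖ ≤ c * A)
    (hJ : ∀ i, i < n → ∀ u, |⟪(T + T') ((T ^ i) w), u⟫| ≤ c * A * ‖u‖)
    (z : V) (hz : P z = z) :
    ∀ i j : ℕ, 1 ≤ j + i → j + i ≤ n →
      |⟪(T ^ j) w, (T ^ i) z⟫| ≤ (i + 1) * c ^ (i + 1) * A * ‖z‖ := by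
  intro i
  induction i with
  | zero =>
    intro j h1 h2
    obtain ⟨k, rfl⟩ : ∃ k, j = k + 1 := ⟨j - 1, by omega⟩
    rw [pow_zero, Module.End.one_apply, ← hz, ← hP, hz, pow_succ' T, Module.End.mul_apply]
    refine (abs_real_inner_le_norm _ _).trans ?_
    have := hw k (by omega)
    simp only [Nat.cast_zero, zero_add, one_mul, pow_one]
    gcongr
  | succ i ih =>
    intro j h1 h2
    have e : ⟪(T ^ j) w, (T ^ (i + 1)) z⟫
        = ⟪(T + T') ((T ^ j) w), (T ^ i) z⟫ - ⟪(T ^ (j + 1)) w, (T ^ i) z⟫ := by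
      rw [pow_succ' T, pow_succ' T, Module.End.mul_apply, Module.End.mul_apply,
        LinearMap.add_apply, inner_add_left, real_inner_comm, hadj, real_inner_comm]
      ring
    rw [e]
    have a1 := ih (j + 1) (by omega) (by omega)
    have a2 := hJ j (by omega) ((T ^ i) z)
    have a3 := aux_pow_norm T c hc hT i z
    have a4 : c * A * ‖(T ^ i) z‖ ≤ c ^ (i + 1) * A * ‖z‖ := by
      calc c * A * ‖(T ^ i) z‖ ≤ c * A * (c ^ i * ‖z‖) := by gcongr
        _ = c ^ (i + 1) * A * ‖z‖ := by ring
    have a5 : c ^ (i + 1) * A * ‖z‖ ≤ c ^ (i + 1 + 1) * A * ‖z‖ := by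
      gcongr
      · omega
    refine (abs_sub _ _).trans ?_
    push_cast
    have a6 : ((i : ℝ) + 1) * c ^ (i + 1) * A * ‖z‖
        ≤ ((i : ℝ) + 1) * (c ^ (i + 1 + 1) * A * ‖z‖) := by
      calc _ = ((i : ℝ) + 1) * (c ^ (i + 1) * A * ‖z‖) := by ring
        _ ≤ _ := by gcongr
    nlinarith [a1, a2, a4, a5, a6]

theorem aux_alt_smul (L P : V →ₗ[ℝ] V) (t : ℝ) (w : V) :
    ∀ l : List ℕ, altComp (t • L) P l w = t ^ l.sum • altComp L P l w
  | [] => by simp [altComp]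
  | [i] => by simp [altComp, smul_pow]
  | i :: j :: rest => by
    have ih := aux_alt_smul L P t w (j :: rest)
    have e : ∀ T : V →ₗ[ℝ] V,
      altComp T P (i :: j :: rest) w = (T ^ i) (P (altComp T P (j :: rest) w)) := fun _ => rfl
    rw [e, e, ih, smul_pow, LinearMap.smul_apply, map_smul, map_smul, smul_smul,
      List.sum_cons (a := i), pow_add]

theorem aux_jump_smul (L L' : V →ₗ[ℝ] V) (t : ℝ) (ht : 0 ≤ t) (v : V) :
    jumpSN (t • L) (t • L') v = Real.sqrt t * jumpSN L L' v := by
  unfold jumpSN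
  rw [← Real.sqrt_mul ht, ← smul_add, LinearMap.smul_apply, real_inner_smul_left]
  ring_nf

/-- Final assembly in terms of the scaled operator. -/
theorem aux_final (T T' P : V →ₗ[ℝ] V) (c A M : ℝ) (hc : 1 ≤ c) (hA : 0 ≤ A) (hM : 0 ≤ M)
    (hadj : ∀ w v : V, ⟪T w, v⟫ = ⟪w, T' v⟫)
    (hP : ∀ w v : V, ⟪P w, v⟫ = ⟪w, P v⟫)
    (hPP : ∀ v : V, P (P v) = P v)
    (hT : ∀ v, ‖T v‖ ≤ c * ‖v‖) (w : V) (s : ℕ)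
    (hw : ∀ i, i < 2 * s - 1 → ‖P (T ((T ^ i) w))‖ ≤ c * A)
    (hJ : ∀ i, i < 2 * s - 1 → ∀ u, |⟪(T + T') ((T ^ i) w), u⟫| ≤ c * A * ‖u‖)
    (α : ℕ → ℝ) (hα : ∀ i ≤ s, |α i| ≤ M) (S : Finset (List ℕ))
    (hS : ∀ iv ∈ S, 2 ≤ iv.length ∧ (∀ x ∈ iv, 1 ≤ x) ∧ iv.sum ≤ s)
    (μ : List ℕ → ℝ) (hμ : ∀ iv ∈ S, |μ iv| ≤ M) :
    ‖(∑ i ∈ Finset.range (s + 1), α i • (T ^ i)) w + ∑ iv ∈ S, μ iv • altComp T P iv w‖ ^ 2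
      ≤ ‖(∑ i ∈ Finset.range (s + 1), α i • (T ^ i)) w‖ ^ 2
        + (2 * ((s + 1) * (S.card * (M * M * ((s + 1) * c ^ (s + 1) * c ^ s))))
            + (S.card * (M * (c ^ s * c ^ s))) ^ 2) * A ^ 2 := by
  have hc0 : 0 ≤ c := by linarith
  have hPn := aux_P_norm P hP hPP
  have hdec : ∀ iv ∈ S, ∃ i z, i + 1 ≤ s ∧ P z = z ∧ ‖z‖ ≤ c ^ s * A ∧ 1 ≤ i ∧
      altComp T P iv w = (T ^ i) z := by
    intro iv hiv
    obtain ⟨h1, h2, h3⟩ := hS iv hiv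
    match iv, h1, h2, h3 with
    | i :: j :: rest, _, h2, h3 =>
      have hj : 1 ≤ j := h2 j (by simp)
      have hi : 1 ≤ i := h2 i (by simp)
      have hsum : i + (j :: rest).sum ≤ s := by rwa [List.sum_cons] at h3
      have hjs : j ≤ (j :: rest).sum := by rw [List.sum_cons]; omega
      refine ⟨i, P (altComp T P (j :: rest) w), by omega, hPP _, ?_, hi, rfl⟩
      refine (aux_P_alt T P c A hc hA hT hPn w (2 * s - 1) hw (j :: rest) (by simp)
        (fun x hx => h2 x (List.mem_cons_of_mem _ hx)) (by omega)).trans ?_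
      gcongr
      · omega
  have hE : ‖∑ iv ∈ S, μ iv • altComp T P iv w‖ ≤ S.card * (M * (c ^ s * c ^ s)) * A := by
    refine (norm_sum_le _ _).trans ?_
    refine (Finset.sum_le_card_nsmul S _ (M * (c ^ s * (c ^ s * A))) ?_).trans (le_of_eq ?_)
    · intro iv hiv
      obtain ⟨i, z, hi, hz, hzn, _, e⟩ := hdec iv hiv
      rw [norm_smul, Real.norm_eq_abs, e]
      have := hμ iv hiv
      have h2 : ‖(T ^ i) z‖ ≤ c ^ s * (c ^ s * A) := by
        refine (aux_pow_norm T c hc hT i z).trans ?_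
        gcongr
        · omega
      gcongr
    · rw [nsmul_eq_mul]; ring
  have hX : |⟪(∑ i ∈ Finset.range (s + 1), α i • (T ^ i)) w, ∑ iv ∈ S, μ iv • altComp T P iv w⟫|
      ≤ (s + 1) * (S.card * (M * M * ((s + 1) * c ^ (s + 1) * c ^ s))) * A ^ 2 := by
    rw [LinearMap.sum_apply, sum_inner]
    refine (Finset.abs_sum_le_sum_abs _ _).trans ?_
    refine (Finset.sum_le_card_nsmul _ _
      (S.card * (M * M * ((s + 1) * c ^ (s + 1) * c ^ s * A ^ 2))) ?_).trans (le_of_eq ?_)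
    · intro j hj
      have hj : j ≤ s := by rw [Finset.mem_range] at hj; omega
      rw [inner_sum]
      refine (Finset.abs_sum_le_sum_abs _ _).trans ?_
      refine (Finset.sum_le_card_nsmul _ _
        (M * M * ((s + 1) * c ^ (s + 1) * c ^ s * A ^ 2)) ?_).trans (le_of_eq ?_)
      · intro iv hiv
        obtain ⟨i, z, hi, hz, hzn, hi1, e⟩ := hdec iv hiv
        have h1 := hμ iv hiv
        have h2 := hα j hj
        have h3 := aux_cross T T' P c A hc hA hadj hP hT w (2 * s - 1) hw hJ z hz i j
          (by omega) (by omega)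
        rw [LinearMap.smul_apply, real_inner_smul_left, real_inner_smul_right, e, abs_mul,
          abs_mul, ← mul_assoc]
        have h4 : |⟪(T ^ j) w, (T ^ i) z⟫| ≤ (s + 1) * c ^ (s + 1) * c ^ s * A ^ 2 := by
          refine h3.trans ?_
          calc ((i : ℝ) + 1) * c ^ (i + 1) * A * ‖z‖
              ≤ (s + 1) * c ^ (s + 1) * A * (c ^ s * A) := by
                gcongr
                · omega
                · omega
            _ = _ := by ring
        gcongr
      · rw [nsmul_eq_mul]
    · rw [nsmul_eq_mul, Finset.card_range]; push_cast; ring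
  rw [norm_add_sq_real]
  have h1 := (abs_le.mp hX).2
  have h2 := pow_le_pow_left₀ (norm_nonneg _) hE 2
  rw [mul_pow] at h2
  linarith

end Helpers

/-- Key energy estimate (Lemma 3.7): for `R = ∑_{i=0}^s α_i (τL)^i` and
`R̃ = R + ∑_{iv} μ_{iv} τ^{|iv|} L^{iv}` (sum over all integer vectors `iv` with
length `≥ 2`, entries `≥ 1`, `|iv| ≤ s`), one has
`‖R̃ w‖² ≤ ‖R w‖² + C λ ∑_{i=0}^{2s-2} τ^{2i+1} |L^i w|_Γ²`. -/
theorem key_energy_estimate :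
    ∀ c₁ c₂ c₃ M : ℝ, 0 < c₁ → 0 < c₂ → 0 < c₃ → 0 < M →
    ∀ s : ℕ, 1 ≤ s →
    ∃ C > (0 : ℝ),
      ∀ (V : Type) [NormedAddCommGroup V] [InnerProductSpace ℝ V],
      ∀ L Lstar P : V →ₗ[ℝ] V,
        (∀ w v : V, ⟪L w, v⟫ = ⟪w, Lstar v⟫) →
        (∀ v : V, ⟪(L + Lstar) v, v⟫ ≤ 0) →
        (∀ w v : V, ⟪P w, v⟫ = ⟪w, P v⟫) →
        (∀ v : V, P (P v) = P v) →
        ∀ h τ : ℝ, 0 < h → 0 < τ → τ / h ≤ 1 →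
        (∀ w : V, ‖P (L w)‖ ≤ c₁ * h ^ (-(1 / 2) : ℝ) * jumpSN L Lstar w) →
        (∀ w : V, ‖P (Lstar w)‖ ≤ c₁ * h ^ (-(1 / 2) : ℝ) * jumpSN L Lstar w) →
        (∀ v : V, jumpSN L Lstar v ≤ c₂ * h ^ (-(1 / 2) : ℝ) * ‖v‖) →
        (∀ v : V, ‖L v‖ ≤ c₃ * h⁻¹ * ‖v‖) →
        ∀ α : ℕ → ℝ, (∀ i ≤ s, |α i| ≤ M) →
        ∀ S : Finset (List ℕ),
          (∀ iv : List ℕ, iv ∈ S ↔ 2 ≤ iv.length ∧ (∀ x ∈ iv, 1 ≤ x) ∧ iv.sum ≤ s) →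
        ∀ μ : List ℕ → ℝ, (∀ iv ∈ S, |μ iv| ≤ M) →
        ∀ w : V,
          ‖(∑ i ∈ Finset.range (s + 1), α i • ((τ • L) ^ i)) w
              + ∑ iv ∈ S, μ iv • (τ ^ iv.sum • altComp L P iv w)‖ ^ 2
            ≤ ‖(∑ i ∈ Finset.range (s + 1), α i • ((τ • L) ^ i)) w‖ ^ 2
              + C * (τ / h) * ∑ i ∈ Finset.range (2 * s - 1),
                  τ ^ (2 * i + 1) * (jumpSN L Lstar ((L ^ i) w)) ^ 2 := by
  intro c₁ c₂ c₃ M hc₁ hc₂ hc₃ hM s hs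
  by_cases hex : ∃ S : Finset (List ℕ),
      ∀ iv : List ℕ, iv ∈ S ↔ 2 ≤ iv.length ∧ (∀ x ∈ iv, 1 ≤ x) ∧ iv.sum ≤ s
  swap
  · refine ⟨1, one_pos, ?_⟩
    intro V _ _ L Lstar P _ _ _ _ h τ _ _ _ _ _ _ _ α _ S hS
    exact absurd ⟨S, hS⟩ hex
  obtain ⟨S₀, hS₀⟩ := hex
  obtain ⟨c, hc1, hcc1, hcc2, hcc3⟩ : ∃ c : ℝ, 1 ≤ c ∧ c₁ ≤ c ∧ c₂ ≤ c ∧ c₃ ≤ c :=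
    ⟨1 + c₁ + c₂ + c₃, by linarith, by linarith, by linarith, by linarith⟩
  have hc0 : 0 < c := by linarith
  refine ⟨2 * ((s + 1) * (S₀.card * (M * M * ((s + 1) * c ^ (s + 1) * c ^ s))))
            + (S₀.card * (M * (c ^ s * c ^ s))) ^ 2 + 1, by positivity, ?_⟩
  intro V _ _ L Lstar P hadj hneg hP hPP h τ hh hτ hlam hPL _ hJn hLn α hα S hS μ hμ w
  obtain rfl : S = S₀ := by
    ext iv
    rw [hS, hS₀]
  have hlam0 : 0 ≤ τ / h := by positivity
  have hadjT : ∀ w v : V, ⟪(τ • L) w, v⟫ = ⟪w, (τ • Lstar) v⟫ := by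
    intro w v
    simp only [LinearMap.smul_apply, real_inner_smul_left, real_inner_smul_right, hadj]
  have hnegT : ∀ v : V, ⟪(τ • L + τ • Lstar) v, v⟫ ≤ 0 := by
    intro v
    rw [← smul_add, LinearMap.smul_apply, real_inner_smul_left]
    exact mul_nonpos_of_nonneg_of_nonpos hτ.le (hneg v)
  have hJs := aux_jump_smul L Lstar τ hτ.le
  have hJ0 : ∀ v, 0 ≤ jumpSN L Lstar v := fun v => Real.sqrt_nonneg _
  have hhalf : h ^ (-(1 / 2) : ℝ) = (Real.sqrt h)⁻¹ := by
    rw [Real.rpow_neg hh.le, Real.sqrt_eq_rpow]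
  have hl : Real.sqrt (τ / h) = Real.sqrt τ * (Real.sqrt h)⁻¹ := by
    rw [Real.sqrt_div hτ.le, div_eq_mul_inv]
  rw [hhalf] at hPL hJn
  set J := jumpSN (τ • L) (τ • Lstar) with hJdef
  have hJT0 : ∀ v, 0 ≤ J v := fun v => Real.sqrt_nonneg _
  have hPT : ∀ v, ‖P ((τ • L) v)‖ ≤ c * (Real.sqrt (τ / h) * J v) := by
    intro v
    rw [LinearMap.smul_apply, map_smul, norm_smul, Real.norm_eq_abs, abs_of_pos hτ, hl, hJs]
    have h1 := hPL v
    have h2 := hJ0 v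
    calc τ * ‖P (L v)‖ ≤ τ * (c * (Real.sqrt h)⁻¹ * jumpSN L Lstar v) := by
          refine mul_le_mul_of_nonneg_left (h1.trans ?_) hτ.le
          gcongr
      _ = (Real.sqrt τ * Real.sqrt τ) * (c * (Real.sqrt h)⁻¹ * jumpSN L Lstar v) := by
          rw [Real.mul_self_sqrt hτ.le]
      _ = _ := by ring
  have hJT : ∀ v, J v ≤ c * Real.sqrt (τ / h) * ‖v‖ := by
    intro v
    rw [hJs, hl]
    have h1 := hJn v
    calc Real.sqrt τ * jumpSN L Lstar v ≤ Real.sqrt τ * (c * (Real.sqrt h)⁻¹ * ‖v‖) := by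
          refine mul_le_mul_of_nonneg_left (h1.trans ?_) (Real.sqrt_nonneg _)
          gcongr
      _ = _ := by ring
  have hTn : ∀ v, ‖(τ • L) v‖ ≤ c * ‖v‖ := by
    intro v
    rw [LinearMap.smul_apply, norm_smul, Real.norm_eq_abs, abs_of_pos hτ]
    calc τ * ‖L v‖ ≤ τ * (c₃ * h⁻¹ * ‖v‖) := by gcongr; exact hLn v
      _ = (τ / h) * (c₃ * ‖v‖) := by ring
      _ ≤ 1 * (c * ‖v‖) := by gcongr
      _ = _ := one_mul _
  have hsq : ∀ i, τ ^ (2 * i + 1) * (jumpSN L Lstar ((L ^ i) w)) ^ 2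
      = (J (((τ • L) ^ i) w)) ^ 2 := by
    intro i
    have e : ∀ (t : ℝ) v, jumpSN L Lstar (t • v) ^ 2 = t ^ 2 * jumpSN L Lstar v ^ 2 := by
      intro t v
      unfold jumpSN
      rw [Real.sq_sqrt (by linarith [hneg (t • v)]), Real.sq_sqrt (by linarith [hneg v]),
        map_smul, real_inner_smul_left, real_inner_smul_right]
      ring
    rw [hJs, mul_pow, Real.sq_sqrt hτ.le, smul_pow, LinearMap.smul_apply, e]
    ring
  simp only [hsq]
  simp only [← aux_alt_smul]
  set Sg := ∑ i ∈ Finset.range (2 * s - 1), (J (((τ • L) ^ i) w)) ^ 2 with hSig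
  have hSig0 : 0 ≤ Sg := Finset.sum_nonneg fun i _ => sq_nonneg _
  have hA : ∀ i, i < 2 * s - 1 →
      Real.sqrt (τ / h) * J (((τ • L) ^ i) w) ≤ Real.sqrt (τ / h * Sg) := by
    intro i hi
    rw [Real.sqrt_mul hlam0]
    gcongr
    apply Real.le_sqrt_of_sq_le
    exact Finset.single_le_sum (f := fun i => (J (((τ • L) ^ i) w)) ^ 2)
      (fun i _ => sq_nonneg _) (Finset.mem_range.mpr hi)
  have hfin := aux_final (τ • L) (τ • Lstar) P c (Real.sqrt (τ / h * Sg)) M hc1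
    (Real.sqrt_nonneg _) hM.le hadjT hP hPP hTn w s
    (fun i hi => (hPT _).trans (by gcongr; exact hA i hi))
    (fun i hi u => by
      refine (aux_cs _ _ hadjT hnegT _ u).trans ?_
      calc J (((τ • L) ^ i) w) * J u ≤ J (((τ • L) ^ i) w) * (c * Real.sqrt (τ / h) * ‖u‖) :=
            mul_le_mul_of_nonneg_left (hJT u) (hJT0 _)
        _ = c * (Real.sqrt (τ / h) * J (((τ • L) ^ i) w)) * ‖u‖ := by ring
        _ ≤ _ := by gcongr; exact hA i hi)
    α hα S (fun iv hiv => (hS iv).mp hiv) μ hμ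
  rw [Real.sq_sqrt (by positivity)] at hfin
  have hnn : 0 ≤ τ / h * Sg := by positivity
  refine hfin.trans ?_
  nlinarith [hnn]
end

section
/- Let r ≥ 3 be an integer with r ≡ 3 (mod 4). There exists a constant μ₀ > 0, depending only on r, with the following property: for every finite-dimensional real inner product space V, every semi-negative linear map L : V → V, and every τ > 0 with τ‖L‖ ≤ μ₀, the operator R = Σ_{i=0}^r (1/i!)(τL)^i satisfies ‖R w‖ ≤ ‖w‖ for all w ∈ V. -/
open RealInnerProductSpace

/-- coefficients of the (scaled) Hilbert matrix -/
noncomputable def rkH (i j : ℕ) : ℝ := 1 / ((i.factorial : ℝ) * j.factorial * (i + j + 1))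

noncomputable def rkC (i j : ℕ) : ℝ := i / ((i.factorial : ℝ) * j.factorial * (i + j))

lemma rkC_succ (i j : ℕ) : rkC (i + 1) j = rkH i j := by
  unfold rkC rkH
  rw [Nat.factorial_succ]
  push_cast
  have : ((i:ℝ) + 1) ≠ 0 := by positivity
  have : ((i:ℝ) + 1 + j) ≠ 0 := by positivity
  have : ((i:ℝ) + j + 1) ≠ 0 := by positivity
  have := Nat.factorial_ne_zero i
  have := Nat.factorial_ne_zero j
  field_simp
  ring

lemma rkC_zero (j : ℕ) : rkC 0 j = 0 := by simp [rkC]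

lemma rkC_add (i j : ℕ) (h : ¬ (i = 0 ∧ j = 0)) :
    rkC i j + rkC j i = 1 / ((i.factorial : ℝ) * j.factorial) := by
  unfold rkC
  have h0 : i + j ≠ 0 := by omega
  have : ((i:ℝ) + j) ≠ 0 := by exact_mod_cast h0
  have : ((j:ℝ) + i) ≠ 0 := by rwa [add_comm]
  have := Nat.factorial_ne_zero i
  have := Nat.factorial_ne_zero j
  field_simp
  ring

lemma rk_tele (n j : ℕ) (b : ℕ → ℝ) :
    ∑ i ∈ Finset.range n, rkH i j * b (i + 1)
      = ∑ i ∈ Finset.range n, rkC i j * b i + rkC n j * b n := by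
  rw [← Finset.sum_range_succ (fun i => rkC i j * b i), Finset.sum_range_succ']
  simp [rkC_zero, rkC_succ]

lemma rkH_symm (i j : ℕ) : rkH i j = rkH j i := by
  unfold rkH; ring

lemma rk_identity (r : ℕ) (a : ℕ → ℕ → ℝ) (ha : ∀ i j, a i j = a j i) :
    ∑ i ∈ Finset.range (r + 1), ∑ j ∈ Finset.range (r + 1),
        rkH i j * (a (i + 1) j + a i (j + 1))
      = ∑ i ∈ Finset.range (r + 1), ∑ j ∈ Finset.range (r + 1),
          1 / ((i.factorial : ℝ) * j.factorial) * a i j - a 0 0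
        + 2 * ∑ j ∈ Finset.range (r + 1), rkH r j * a (r + 1) j := by
  have h1 : ∑ i ∈ Finset.range (r + 1), ∑ j ∈ Finset.range (r + 1), rkH i j * a (i + 1) j
      = ∑ i ∈ Finset.range (r + 1), ∑ j ∈ Finset.range (r + 1), rkC i j * a i j
        + ∑ j ∈ Finset.range (r + 1), rkH r j * a (r + 1) j := by
    rw [Finset.sum_comm, Finset.sum_congr rfl (fun j _ => rk_tele (r + 1) j (fun i => a i j)),
      Finset.sum_add_distrib, Finset.sum_comm]
    simp [rkC_succ]
  have h2 : ∑ i ∈ Finset.range (r + 1), ∑ j ∈ Finset.range (r + 1), rkH i j * a i (j + 1)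
      = ∑ i ∈ Finset.range (r + 1), ∑ j ∈ Finset.range (r + 1), rkH i j * a (i + 1) j := by
    rw [Finset.sum_comm]
    refine Finset.sum_congr rfl fun i _ => Finset.sum_congr rfl fun j _ => ?_
    rw [rkH_symm, ha]
  have h3 : ∑ i ∈ Finset.range (r + 1), ∑ j ∈ Finset.range (r + 1), rkC i j * a i j
      = ∑ i ∈ Finset.range (r + 1), ∑ j ∈ Finset.range (r + 1), rkC j i * a i j := by
    rw [Finset.sum_comm]
    refine Finset.sum_congr rfl fun i _ => Finset.sum_congr rfl fun j _ => ?_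
    rw [ha]
  have h4 : ∑ i ∈ Finset.range (r + 1), ∑ j ∈ Finset.range (r + 1), (rkC i j + rkC j i) * a i j
      = ∑ i ∈ Finset.range (r + 1), ∑ j ∈ Finset.range (r + 1),
          1 / ((i.factorial : ℝ) * j.factorial) * a i j - a 0 0 := by
    have h5 : ∀ i ∈ Finset.range (r + 1), ∀ j ∈ Finset.range (r + 1),
        (rkC i j + rkC j i) * a i j = 1 / ((i.factorial : ℝ) * j.factorial) * a i j
          - (if i = 0 then (if j = 0 then a 0 0 else 0) else 0) := by
      intro i _ j _
      by_cases h : i = 0 ∧ j = 0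
      · obtain ⟨rfl, rfl⟩ := h
        simp [rkC_zero]
      · rw [rkC_add i j h]
        split_ifs <;> simp_all
    rw [Finset.sum_congr rfl (fun i hi => Finset.sum_congr rfl (h5 i hi))]
    simp [Finset.sum_sub_distrib]
  simp only [mul_add, add_mul, Finset.sum_add_distrib] at *
  linarith

lemma rk_quad_eq (n : ℕ) (x : Fin n → ℝ) :
    ∑ i, ∑ j, x i * x j * rkH i j
      = ∫ t in (0:ℝ)..1, (∑ i : Fin n, x i / ((i : ℕ).factorial : ℝ) * t ^ (i : ℕ)) ^ 2 := by
  have : ∀ t : ℝ, (∑ i : Fin n, x i / ((i : ℕ).factorial : ℝ) * t ^ (i : ℕ)) ^ 2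
      = ∑ i : Fin n, ∑ j : Fin n, (x i / ((i : ℕ).factorial : ℝ) * (x j / ((j : ℕ).factorial : ℝ)))
          * t ^ ((i : ℕ) + j) := by
    intro t
    rw [sq, Finset.sum_mul_sum]
    refine Finset.sum_congr rfl fun i _ => Finset.sum_congr rfl fun j _ => ?_
    rw [pow_add]; ring
  simp_rw [this]
  rw [intervalIntegral.integral_finsetSum]
  · refine Finset.sum_congr rfl fun i _ => ?_
    rw [intervalIntegral.integral_finsetSum]
    · refine Finset.sum_congr rfl fun j _ => ?_
      rw [intervalIntegral.integral_const_mul, integral_pow]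
      unfold rkH
      simp
      field_simp
    · intro j _
      exact Continuous.intervalIntegrable (by fun_prop) _ _
  · intro j _
    exact Continuous.intervalIntegrable (by fun_prop) _ _

lemma rk_quad_pos (n : ℕ) (x : Fin n → ℝ) (hx : x ≠ 0) :
    0 < ∑ i, ∑ j, x i * x j * rkH i j := by
  rw [rk_quad_eq]
  have hcont : Continuous (fun t : ℝ =>
    (∑ i : Fin n, x i / ((i : ℕ).factorial : ℝ) * t ^ (i : ℕ)) ^ 2) := by fun_prop
  refine intervalIntegral.integral_pos one_pos hcont.continuousOn (fun t _ => sq_nonneg _) ?_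
  by_contra! hcon
  apply hx
  let p : Polynomial ℝ := ∑ i : Fin n, Polynomial.monomial (i : ℕ) (x i / ((i : ℕ).factorial : ℝ))
  have hp : p = 0 := by
    refine Polynomial.eq_zero_of_infinite_isRoot p
      ((Set.Icc_infinite (zero_lt_one' ℝ)).mono fun t ht => ?_)
    have := hcon t ht
    have h2 : (∑ i : Fin n, x i / ((i : ℕ).factorial : ℝ) * t ^ (i : ℕ)) = 0 :=
      pow_eq_zero_iff (two_ne_zero) |>.1 (le_antisymm this (sq_nonneg _))
    simpa [p, Polynomial.IsRoot, Polynomial.eval_finsetSum] using h2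
  funext i
  have := congrArg (fun q => Polynomial.coeff q (i : ℕ)) hp
  simp only [p, Polynomial.finsetSum_coeff, Polynomial.coeff_monomial, Polynomial.coeff_zero,
    Fin.val_inj] at this
  simpa [Nat.factorial_ne_zero] using this

lemma rk_quad_lower (n : ℕ) : ∃ c > (0 : ℝ), ∀ x : Fin (n + 1) → ℝ,
    c * ∑ i, x i ^ 2 ≤ ∑ i, ∑ j, x i * x j * rkH i j := by
  let q : EuclideanSpace ℝ (Fin (n + 1)) → ℝ := fun x => ∑ i, ∑ j, x i * x j * rkH i j
  have hq : Continuous q := by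
    unfold q; fun_prop
  obtain ⟨y, hy, hmin⟩ := (isCompact_sphere (0 : EuclideanSpace ℝ (Fin (n + 1))) 1).exists_isMinOn
    (NormedSpace.sphere_nonempty.2 zero_le_one) hq.continuousOn
  have hy1 : ‖y‖ = 1 := by simpa using hy
  have hqy : 0 < q y := rk_quad_pos _ (fun i => y i) (by
    intro h
    have : y = 0 := by ext i; exact congrFun h i
    simp [this] at hy1)
  refine ⟨q y, hqy, fun x => ?_⟩
  let X : EuclideanSpace ℝ (Fin (n + 1)) := WithLp.toLp 2 x
  have hX : ‖X‖ ^ 2 = ∑ i, x i ^ 2 := by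
    rw [EuclideanSpace.norm_sq_eq]; simp [X]
  by_cases h0 : X = 0
  · have : ∀ i, x i = 0 := fun i => congrFun (congrArg (WithLp.ofLp) h0) i
    simp [this]
  · have hn : 0 < ‖X‖ := norm_pos_iff.2 h0
    have h1 : q y ≤ q (‖X‖⁻¹ • X) := hmin (by simp [norm_smul, hn.ne'])
    have h2 : q (‖X‖⁻¹ • X) = (‖X‖⁻¹) ^ 2 * q X := by
      simp only [q, Finset.mul_sum]
      refine Finset.sum_congr rfl fun i _ => Finset.sum_congr rfl fun j _ => ?_
      simp; ring
    rw [← hX]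
    change _ ≤ q X
    rw [h2] at h1
    calc q y * ‖X‖ ^ 2 ≤ ((‖X‖⁻¹) ^ 2 * q X) * ‖X‖ ^ 2 := by gcongr
      _ = q X := by field_simp

lemma rk_form_lower (n : ℕ) : ∃ c > (0 : ℝ), ∀ (V : Type) [AddCommGroup V] [Module ℝ V]
    (B : V →ₗ[ℝ] V →ₗ[ℝ] ℝ) (_ : ∀ u, 0 ≤ B u u) (v : ℕ → V),
    c * ∑ i ∈ Finset.range (n + 1), B (v i) (v i) ≤
      ∑ i ∈ Finset.range (n + 1), ∑ j ∈ Finset.range (n + 1), rkH i j * B (v i) (v j) := by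
  obtain ⟨c, hc, hq⟩ := rk_quad_lower n
  refine ⟨c, hc, fun V _ _ B hB v => ?_⟩
  let M : Matrix (Fin (n + 1)) (Fin (n + 1)) ℝ := fun i j => rkH i j - if i = j then c else 0
  have hM : M.PosSemidef := by
    rw [Matrix.posSemidef_iff_dotProduct_mulVec]
    constructor
    · ext i j
      rw [Matrix.conjTranspose_apply]
      simp [M, rkH_symm (j : ℕ) i, eq_comm]
    · intro x
      have := hq x
      have h2 : star x ⬝ᵥ M.mulVec x = ∑ i, ∑ j, x i * x j * rkH i j - c * ∑ i, x i ^ 2 := by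
        simp only [dotProduct, Matrix.mulVec, M, Finset.mul_sum, sub_mul, mul_sub,
          Finset.sum_sub_distrib]
        congr 1
        · refine Finset.sum_congr rfl fun i _ => Finset.sum_congr rfl fun j _ => ?_
          simp; ring
        · refine Finset.sum_congr rfl fun i _ => ?_
          simp; ring
      rw [h2]; linarith
  obtain ⟨m, N, hN⟩ := Matrix.posSemidef_iff_eq_sum_vecMulVec.mp hM
  have hNij : ∀ i j, M i j = ∑ l, N l i * N l j := by
    intro i j
    rw [hN]
    simp [Matrix.sum_apply, Matrix.vecMulVec_apply]
  have key : ∑ i, ∑ j, M i j * B (v i) (v j) =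
      ∑ l, B (∑ i, N l i • v i) (∑ i, N l i • v i) := by
    simp only [hNij, map_sum, LinearMap.sum_apply, map_smul, LinearMap.smul_apply, smul_eq_mul,
      Finset.sum_mul]
    rw [Finset.sum_comm (s := (Finset.univ : Finset (Fin m)))]
    rw [Finset.sum_comm]
    refine Finset.sum_congr rfl fun i _ => ?_
    rw [Finset.sum_comm]
    refine Finset.sum_congr rfl fun l _ => ?_
    rw [Finset.mul_sum]
    refine Finset.sum_congr rfl fun j _ => ?_
    ring
  have hnn : 0 ≤ ∑ i, ∑ j, M i j * B (v i) (v j) := by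
    rw [key]; exact Finset.sum_nonneg fun l _ => hB _
  have h3 : ∑ i, ∑ j, M i j * B (v i) (v j) = ∑ i : Fin (n + 1), ∑ j : Fin (n + 1), rkH i j * B (v i) (v j)
      - c * ∑ i : Fin (n + 1), B (v i) (v i) := by
    simp [M, sub_mul, Finset.sum_sub_distrib, Finset.mul_sum]
  rw [h3] at hnn
  simp only [Finset.sum_range]
  linarith

lemma rk_transfer (a b : ℕ → ℕ → ℝ) (hab : ∀ i j, a (i + 1) j = -(a i (j + 1)) - b i j)
    (k r : ℕ) (δ : ℝ) (hb : ∀ i j, k ≤ i → i ≤ r → j < k → |b i j| ≤ δ) :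
    ∀ n p q, q + n = k → k ≤ p → p + n ≤ r + 1 → |a (p + n) q - (-1) ^ n * a p k| ≤ n * δ := by
  intro n
  induction n with
  | zero =>
    intro p q h1 _ _
    have : q = k := by omega
    simp [this]
  | succ n ih =>
    intro p q h1 h2 h3
    have h4 := ih p (q + 1) (by omega) h2 (by omega)
    have h5 := hb (p + n) q (by omega) (by omega) (by omega)
    rw [← add_assoc, hab, pow_succ]
    rw [abs_le] at *
    push_cast
    constructor <;> nlinarith

lemma rk_young {V : Type} [AddCommGroup V] [Module ℝ V]
    (B : V →ₗ[ℝ] V →ₗ[ℝ] ℝ) (hB : ∀ u, 0 ≤ B u u) (hs : ∀ u v, B u v = B v u)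
    (ε : ℝ) (hε : 0 < ε) (u v : V) : |B u v| ≤ ε * B v v + B u u / (4 * ε) := by
  have h1 := hB (u + (2 * ε) • v)
  have h2 := hB (u - (2 * ε) • v)
  simp only [map_add, map_sub, LinearMap.add_apply, LinearMap.sub_apply, map_smul,
    LinearMap.smul_apply, smul_eq_mul, hs v u] at h1 h2
  have h3 : ε * B v v + B u u / (4 * ε) = (4 * ε ^ 2 * B v v + B u u) / (4 * ε) := by
    field_simp
  rw [h3, le_div_iff₀ (by positivity)]
  rcases abs_cases (B u v) with ⟨h, _⟩ | ⟨h, _⟩ <;> rw [h] <;> nlinarith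

set_option maxHeartbeats 1000000 in
theorem rk_monotonicity_stability_mod_three (r : ℕ) (hr : 3 ≤ r) (hmod : r % 4 = 3) :
    ∃ μ₀ > (0 : ℝ),
      ∀ (V : Type) [NormedAddCommGroup V] [InnerProductSpace ℝ V] [FiniteDimensional ℝ V],
      ∀ L Lstar : V →L[ℝ] V,
        (∀ w v : V, ⟪L w, v⟫ = ⟪w, Lstar v⟫) →
        (∀ v : V, ⟪(L + Lstar) v, v⟫ ≤ 0) →
        ∀ τ : ℝ, 0 < τ → τ * ‖L‖ ≤ μ₀ →
        ∀ w : V,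
          ‖(∑ i ∈ Finset.range (r + 1), (1 / (i.factorial : ℝ)) • (τ • L) ^ i) w‖ ≤ ‖w‖ := by
  obtain ⟨c, hc, hform⟩ := rk_form_lower r
  obtain ⟨k, hk, hkev, hk1⟩ : ∃ k, r + 1 = k + k ∧ Even k ∧ 1 ≤ k :=
    ⟨(r + 1) / 2, by omega, by rw [Nat.even_iff]; omega, by omega⟩
  have hkR : (1 : ℝ) ≤ k := by exact_mod_cast hk1
  set h0 : ℝ := rkH r 0 with hh0
  have hh0pos : 0 < h0 := by rw [hh0, rkH]; positivity
  set ε : ℝ := c / (2 * (r + 1) * k) with hε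
  have hεpos : 0 < ε := by positivity
  have hεc : 2 * (r + 1) * k * ε = c := by rw [hε]; field_simp
  set D : ℝ := (r + 1) * k / ε + 2 * r with hD
  have hDpos : 0 < D := by positivity
  refine ⟨min 1 (2 * h0 / D), by positivity, ?_⟩
  intro V _ _ _ L Lstar hadj hneg τ hτ hτL w
  set μ : ℝ := τ * ‖L‖ with hμ
  have hμ0 : 0 ≤ μ := by positivity
  have hμ1 : μ ≤ 1 := hτL.trans (min_le_left _ _)
  have hμD : μ * D ≤ 2 * h0 := by
    rw [← le_div_iff₀ hDpos]; exact hτL.trans (min_le_right _ _)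
  set A : V →L[ℝ] V := τ • L with hA
  have hAn : ‖A‖ = μ := by rw [hA, norm_smul, Real.norm_of_nonneg hτ.le]
  have hAneg : ∀ v : V, ⟪A v, v⟫ ≤ 0 := by
    intro v
    have h1 := hneg v
    rw [ContinuousLinearMap.add_apply, inner_add_left, real_inner_comm v (Lstar v), ← hadj] at h1
    rw [hA, ContinuousLinearMap.smul_apply, real_inner_smul_left]
    nlinarith
  let v : ℕ → V := fun i => (A ^ i) w
  have hvs : ∀ i, v (i + 1) = A (v i) := fun i => by
    simp only [v, pow_succ', ContinuousLinearMap.mul_apply]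
  let B : V →ₗ[ℝ] V →ₗ[ℝ] ℝ :=
    -((innerₗ V).comp A.toLinearMap + (innerₗ V).compl₂ A.toLinearMap)
  have hBdef : ∀ x y, B x y = -(⟪A x, y⟫ + ⟪x, A y⟫) := fun x y => by simp [B]
  have hBnn : ∀ u, 0 ≤ B u u := fun u => by
    rw [hBdef, real_inner_comm (A u) u]; have := hAneg u; linarith
  have hBs : ∀ x y, B x y = B y x := fun x y => by
    rw [hBdef, hBdef, real_inner_comm x (A y), real_inner_comm (A x) y]; ring
  let a : ℕ → ℕ → ℝ := fun i j => ⟪v i, v j⟫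
  let b : ℕ → ℕ → ℝ := fun i j => B (v i) (v j)
  have hasymm : ∀ i j, a i j = a j i := fun i j => real_inner_comm _ _
  have hab : ∀ i j, a (i + 1) j = -(a i (j + 1)) - b i j := fun i j => by
    simp only [a, b, hBdef, hvs]; ring
  -- norm decay
  have hstep : ∀ i, ‖v (i + 1)‖ ≤ μ * ‖v i‖ := fun i => by
    rw [hvs, ← hAn]; exact A.le_opNorm _
  have hmono : ∀ m, ‖v (k + m)‖ ≤ ‖v k‖ := fun m => by
    induction m with
    | zero => simp
    | succ m ih =>
      have := hstep (k + m)
      rw [← add_assoc]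
      nlinarith [norm_nonneg (v (k + m))]
  have hmono' : ∀ i, k ≤ i → ‖v i‖ ≤ ‖v k‖ := fun i hi => by
    obtain ⟨m, rfl⟩ := Nat.exists_eq_add_of_le hi
    exact hmono m
  have hsmall : ∀ i, k < i → ‖v i‖ ≤ μ * ‖v k‖ := fun i hi => by
    obtain ⟨m, rfl⟩ := Nat.exists_eq_add_of_lt hi
    exact (hstep (k + m)).trans (by gcongr; exact hmono m)
  set N : ℝ := ‖v k‖ ^ 2 with hN
  have hN0 : 0 ≤ N := sq_nonneg _
  have haN : ∀ i j, k < i → k ≤ j → |a i j| ≤ μ * N := fun i j hi hj => by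
    calc |a i j| ≤ ‖v i‖ * ‖v j‖ := abs_real_inner_le_norm _ _
      _ ≤ (μ * ‖v k‖) * ‖v k‖ := by
        gcongr
        · exact hsmall i hi
        · exact hmono' j hj
      _ = μ * N := by rw [hN]; ring
  have hbN : ∀ i, k ≤ i → b i i ≤ 2 * μ * N := fun i hi => by
    have h1 : b i i = -2 * a (i + 1) i := by
      have := hab i i
      rw [hasymm i (i + 1)] at this
      linarith
    have h2 := haN (i + 1) i (by omega) hi
    rw [abs_le] at h2
    linarith
  set S : ℝ := ∑ i ∈ Finset.range (r + 1), B (v i) (v i) with hS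
  have hS0 : 0 ≤ S := Finset.sum_nonneg fun i _ => hBnn _
  have hbS : ∀ j, j ≤ r → b j j ≤ S := fun j hj =>
    Finset.single_le_sum (f := fun i => B (v i) (v i)) (fun i _ => hBnn _)
      (Finset.mem_range.2 (by omega))
  set δ : ℝ := ε * S + μ * N / (2 * ε) with hδ
  have hδ0 : 0 ≤ δ := by positivity
  have hb : ∀ i j, k ≤ i → i ≤ r → j < k → |b i j| ≤ δ := fun i j hi hir hj => by
    refine (rk_young B hBnn hBs ε hεpos (v i) (v j)).trans ?_
    have h1 := hbS j (by omega)
    have h2 := hbN i hi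
    calc ε * b j j + b i i / (4 * ε) ≤ ε * S + (2 * μ * N) / (4 * ε) := by gcongr
      _ = δ := by rw [hδ]; field_simp; ring
  have htr := rk_transfer a b hab k r δ hb
  have ha0 : N - k * δ ≤ a (r + 1) 0 := by
    have h1 := htr k k 0 (by omega) le_rfl (by omega)
    rw [hkev.neg_one_pow, ← hk, abs_le] at h1
    have h2 : a k k = N := real_inner_self_eq_norm_sq _
    rw [h2] at h1
    linarith [h1.1]
  have haj : ∀ j, j < r → -(μ * N + k * δ) ≤ a (r + 1) (j + 1) := fun j hj => by
    have hkδ : 0 ≤ k * δ := by positivity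
    rcases le_or_gt (j + 1) k with h | h
    · obtain ⟨n, hn⟩ := Nat.exists_eq_add_of_le h
      have h1 := htr n (k + (j + 1)) (j + 1) (by omega) (by omega) (by omega)
      have h2 := haN (k + (j + 1)) k (by omega) le_rfl
      have e : k + (j + 1) + n = r + 1 := by omega
      have h3 : (n : ℝ) * δ ≤ k * δ := by
        gcongr; omega
      rw [e] at h1
      have h4 : |(-1 : ℝ) ^ n * a (k + (j + 1)) k| ≤ μ * N := by
        simpa [abs_mul] using h2
      rw [abs_le] at h1 h4
      linarith [h1.1, h4.1]
    · have h2 := haN (r + 1) (j + 1) (by omega) h.le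
      rw [abs_le] at h2
      linarith [h2.1]
  have hH : ∀ j, 0 ≤ rkH r j ∧ rkH r j ≤ 1 := fun j => by
    have h1 : (1 : ℝ) ≤ r.factorial := by exact_mod_cast Nat.one_le_iff_ne_zero.2 (Nat.factorial_ne_zero r)
    have h2 : (1 : ℝ) ≤ j.factorial := by exact_mod_cast Nat.one_le_iff_ne_zero.2 (Nat.factorial_ne_zero j)
    have h3 : (1 : ℝ) ≤ r + j + 1 := by
      have : (0 : ℝ) ≤ r + j := by positivity
      linarith
    unfold rkH
    refine ⟨by positivity, ?_⟩
    rw [div_le_one (by positivity)]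
    exact one_le_mul_of_one_le_of_one_le (one_le_mul_of_one_le_of_one_le h1 h2) h3
  have hsum : h0 * (N - k * δ) - r * (μ * N + k * δ)
      ≤ ∑ j ∈ Finset.range (r + 1), rkH r j * a (r + 1) j := by
    rw [Finset.sum_range_succ']
    have h1 : h0 * (N - k * δ) ≤ rkH r 0 * a (r + 1) 0 := by gcongr
    have h2 : ∑ j ∈ Finset.range r, -(μ * N + k * δ)
        ≤ ∑ j ∈ Finset.range r, rkH r (j + 1) * a (r + 1) (j + 1) := by
      refine Finset.sum_le_sum fun j hj => ?_
      have h3 := haj j (Finset.mem_range.1 hj)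
      obtain ⟨h4, h5⟩ := hH (j + 1)
      have h6 : 0 ≤ μ * N + k * δ := by positivity
      nlinarith
    rw [Finset.sum_const, Finset.card_range, nsmul_eq_mul] at h2
    linarith
  have hR : (∑ i ∈ Finset.range (r + 1), (1 / (i.factorial : ℝ)) • A ^ i) w
      = ∑ i ∈ Finset.range (r + 1), (1 / (i.factorial : ℝ)) • v i := by
    simp [v, ContinuousLinearMap.sum_apply]
  have hRsq : ‖(∑ i ∈ Finset.range (r + 1), (1 / (i.factorial : ℝ)) • A ^ i) w‖ ^ 2
      = ∑ i ∈ Finset.range (r + 1), ∑ j ∈ Finset.range (r + 1),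
          1 / ((i.factorial : ℝ) * j.factorial) * a i j := by
    rw [hR, ← real_inner_self_eq_norm_sq, sum_inner]
    refine Finset.sum_congr rfl fun i _ => ?_
    rw [inner_sum]
    refine Finset.sum_congr rfl fun j _ => ?_
    rw [real_inner_smul_left, real_inner_smul_right]
    simp only [a]
    field_simp
  have hid := rk_identity r a hasymm
  have hBsum : ∑ i ∈ Finset.range (r + 1), ∑ j ∈ Finset.range (r + 1),
        rkH i j * (a (i + 1) j + a i (j + 1))
      = - ∑ i ∈ Finset.range (r + 1), ∑ j ∈ Finset.range (r + 1), rkH i j * B (v i) (v j) := by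
    rw [← Finset.sum_neg_distrib]
    refine Finset.sum_congr rfl fun i _ => ?_
    rw [← Finset.sum_neg_distrib]
    refine Finset.sum_congr rfl fun j _ => ?_
    have : a (i + 1) j + a i (j + 1) = - B (v i) (v j) := by
      rw [hab]; simp only [b]; ring
    rw [this]; ring
  have hf := hform V B hBnn v
  have ha00 : a 0 0 = ‖w‖ ^ 2 := by simp [a, v]
  rw [hBsum, ← hRsq, ha00] at hid
  have hh1 : h0 ≤ 1 := (hH 0).2
  have hkδ : 0 ≤ k * δ := by positivity
  have e1 : 2 * (r + 1) * (k * δ) = c * S + (r + 1) * k / ε * (μ * N) := by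
    rw [hδ, ← hεc]; field_simp
  have e2 : μ * D * N ≤ 2 * h0 * N := by gcongr
  have e3 : h0 * (k * δ) ≤ k * δ := mul_le_of_le_one_left hkδ hh1
  rw [hD] at e2
  have hfin : ‖(∑ i ∈ Finset.range (r + 1), (1 / (i.factorial : ℝ)) • A ^ i) w‖ ^ 2 ≤ ‖w‖ ^ 2 := by
    linarith
  exact le_of_sq_le_sq hfin (norm_nonneg _)
end
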